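/- Let t > 0, let (x, y) be an admissible reverse transition (x and y differ in exactly one coordinate j with x j = m and y j ≠ m), and suppose q_t x > 0. Then the score function r(u) := q_u y / q_u x is differentiable at t and its derivative satisfies |r'(t)| ≤ r(t) · ( (m̄(x) + m̄(y)) · exp(−t)/(1 − exp(−t)) + (2d − m̄(x) − m̄(y)) ). In particular, since exp(−t)/(1 − exp(−t)) ≤ 1/t, one has |r'(t)| ≤ r(t) · ( (m̄(x) + m̄(y))/t + (2d − m̄(x) − m̄(y)) ). -/

import Mathlib

open Finset

/-- Per-token absorbing transition kernel. -/
noncomputable def absK (S : ℕ) (m : Fin S) (t : ℝ) (a b : Fin S) : ℝ :=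
  if a = b then (if a = m then 1 else Real.exp (-t))
  else (if b = m then 1 - Real.exp (-t) else 0)

/-- Forward marginal at time `t` of the absorbing diffusion started at `q0`. -/
noncomputable def fwd (S d : ℕ) (m : Fin S) (q0 : (Fin d → Fin S) → ℝ) (t : ℝ)
    (x : Fin d → Fin S) : ℝ :=
  ∑ x0 : Fin d → Fin S, q0 x0 * ∏ i : Fin d, absK S m t (x0 i) (x i)

/-- Number of masked coordinates. -/
def nmask (S d : ℕ) (m : Fin S) (x : Fin d → Fin S) : ℕ :=
  (Finset.univ.filter (fun i => x i = m)).card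

lemma absK_deriv (S : ℕ) (m : Fin S) (t : ℝ) (ht : 0 < t) (a b : Fin S) :
    ∃ c : ℝ, HasDerivAt (fun u => absK S m u a b) (absK S m t a b * c) t ∧
      |c| ≤ if b = m then Real.exp (-t) / (1 - Real.exp (-t)) else 1 := by
  have h1 : 0 < 1 - Real.exp (-t) := by
    have : Real.exp (-t) < 1 := by simpa using ht
    linarith
  have hE : 0 ≤ Real.exp (-t) / (1 - Real.exp (-t)) := by positivity
  have he : HasDerivAt (fun u : ℝ => Real.exp (-u)) (Real.exp (-t) * (-1)) t :=
    (hasDerivAt_neg t).exp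
  unfold absK
  by_cases hab : a = b
  · subst hab
    by_cases ham : a = m
    · simp only [ham, if_true]
      exact ⟨0, by simpa using hasDerivAt_const t (1:ℝ), by simpa using hE⟩
    · simp only [ham, if_true, if_false]
      exact ⟨-1, he, by simp⟩
  · by_cases hbm : b = m
    · simp only [hab, hbm, if_true, if_false]
      subst hbm
      simp only [hab, if_false]
      refine ⟨Real.exp (-t) / (1 - Real.exp (-t)), ?_, by rw [abs_of_nonneg hE]⟩
      have h2 := he.const_sub 1
      have h3 : (1 - Real.exp (-t)) * (Real.exp (-t) / (1 - Real.exp (-t)))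
          = -(Real.exp (-t) * -1) := by
        field_simp
      rw [h3]
      exact h2
    · simp only [hab, hbm, if_false]
      exact ⟨0, by simpa using hasDerivAt_const t (0:ℝ), by simp⟩

lemma absK_nonneg (S : ℕ) (m : Fin S) (t : ℝ) (ht : 0 < t) (a b : Fin S) :
    0 ≤ absK S m t a b := by
  have : Real.exp (-t) < 1 := by simpa using ht
  have := Real.exp_pos (-t)
  unfold absK
  split_ifs <;> linarith

lemma fwd_deriv (S d : ℕ) (m : Fin S) (q0 : (Fin d → Fin S) → ℝ) (hq0 : ∀ x, 0 ≤ q0 x)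
    (t : ℝ) (ht : 0 < t) (x : Fin d → Fin S) :
    ∃ D : ℝ, HasDerivAt (fun u => fwd S d m q0 u x) D t ∧
      |D| ≤ fwd S d m q0 t x * ((nmask S d m x : ℝ) * (Real.exp (-t) / (1 - Real.exp (-t)))
        + ((d : ℝ) - nmask S d m x)) := by
  choose c hc hb using absK_deriv S m t ht
  have hB : ∑ i : Fin d, (if x i = m then Real.exp (-t) / (1 - Real.exp (-t)) else 1)
      = (nmask S d m x : ℝ) * (Real.exp (-t) / (1 - Real.exp (-t)))
        + ((d : ℝ) - nmask S d m x) := by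
    have h := Finset.card_filter_add_card_filter_not (s := (univ : Finset (Fin d)))
      (fun i => x i = m)
    have h' : ((univ.filter (fun i => x i = m)).card : ℝ)
      + ((univ.filter (fun i => ¬ x i = m)).card : ℝ) = d := by
      rw [← Nat.cast_add, h]; simp
    rw [Finset.sum_ite]
    simp only [Finset.sum_const, nsmul_eq_mul, nmask]
    linarith
  rw [← hB]
  refine ⟨∑ x0 : Fin d → Fin S, q0 x0 * ((∏ i : Fin d, absK S m t (x0 i) (x i)) *
    ∑ i, c (x0 i) (x i)), ?_, ?_⟩
  · unfold fwd
    refine HasDerivAt.fun_sum fun x0 _ => HasDerivAt.const_mul _ ?_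
    have h := HasDerivAt.fun_finsetProd (u := (univ : Finset (Fin d)))
      (fun i _ => hc (x0 i) (x i))
    convert h using 1
    rw [Finset.mul_sum]
    refine Finset.sum_congr rfl fun i hi => ?_
    rw [← Finset.mul_prod_erase univ _ hi, smul_eq_mul]
    ring
  · unfold fwd
    rw [Finset.sum_mul]
    refine (Finset.abs_sum_le_sum_abs _ _).trans (Finset.sum_le_sum fun x0 _ => ?_)
    have hP : 0 ≤ ∏ i : Fin d, absK S m t (x0 i) (x i) :=
      Finset.prod_nonneg fun i _ => absK_nonneg S m t ht _ _
    rw [abs_mul, abs_mul, abs_of_nonneg (hq0 x0), abs_of_nonneg hP, mul_assoc]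
    refine mul_le_mul_of_nonneg_left (mul_le_mul_of_nonneg_left ?_ hP) (hq0 x0)
    exact (Finset.abs_sum_le_sum_abs _ _).trans (Finset.sum_le_sum fun i _ => hb _ _)

/-- The score `r(u) = q_u(y)/q_u(x)` of an admissible reverse transition is
differentiable, with `|r'(t)| ≤ r(t)((m̄(x)+m̄(y)) e^{-t}/(1-e^{-t}) + (2d-m̄(x)-m̄(y)))`,
hence also `|r'(t)| ≤ r(t)((m̄(x)+m̄(y))/t + (2d-m̄(x)-m̄(y)))`. -/
theorem absorbing_score_deriv_bound (S d : ℕ) (hS : 2 ≤ S) (hd : 1 ≤ d) (m : Fin S)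
    (q0 : (Fin d → Fin S) → ℝ) (hq0 : ∀ x, 0 ≤ q0 x)
    (hq0sum : ∑ x : Fin d → Fin S, q0 x = 1)
    (t : ℝ) (ht : 0 < t) (x y : Fin d → Fin S) (j : Fin d)
    (hxj : x j = m) (hyj : y j ≠ m) (hoff : ∀ i : Fin d, i ≠ j → x i = y i)
    (hqx : 0 < fwd S d m q0 t x) :
    DifferentiableAt ℝ (fun u : ℝ => fwd S d m q0 u y / fwd S d m q0 u x) t ∧
      |deriv (fun u : ℝ => fwd S d m q0 u y / fwd S d m q0 u x) t|
        ≤ (fwd S d m q0 t y / fwd S d m q0 t x) *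
            (((nmask S d m x : ℝ) + (nmask S d m y : ℝ))
                * Real.exp (-t) / (1 - Real.exp (-t))
              + (2 * (d : ℝ) - (nmask S d m x : ℝ) - (nmask S d m y : ℝ))) ∧
      |deriv (fun u : ℝ => fwd S d m q0 u y / fwd S d m q0 u x) t|
        ≤ (fwd S d m q0 t y / fwd S d m q0 t x) *
            (((nmask S d m x : ℝ) + (nmask S d m y : ℝ)) / t
              + (2 * (d : ℝ) - (nmask S d m x : ℝ) - (nmask S d m y : ℝ))) := by
  obtain ⟨Dx, hDx, bx⟩ := fwd_deriv S d m q0 hq0 t ht x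
  obtain ⟨Dy, hDy, bY⟩ := fwd_deriv S d m q0 hq0 t ht y
  have hqy : 0 ≤ fwd S d m q0 t y := Finset.sum_nonneg fun x0 _ =>
    mul_nonneg (hq0 x0) (Finset.prod_nonneg fun i _ => absK_nonneg S m t ht _ _)
  have hD := hDy.fun_div hDx hqx.ne'
  have h1 : 0 < 1 - Real.exp (-t) := by
    have : Real.exp (-t) < 1 := by simpa using ht
    linarith
  have hE : Real.exp (-t) / (1 - Real.exp (-t)) ≤ 1 / t := by
    rw [div_le_div_iff₀ h1 ht]
    have h2 := Real.add_one_le_exp t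
    have h3 : Real.exp (-t) * Real.exp t = 1 := by rw [← Real.exp_add]; simp
    nlinarith [Real.exp_pos (-t)]
  have key : |deriv (fun u : ℝ => fwd S d m q0 u y / fwd S d m q0 u x) t|
        ≤ (fwd S d m q0 t y / fwd S d m q0 t x) *
            (((nmask S d m x : ℝ) + (nmask S d m y : ℝ))
                * Real.exp (-t) / (1 - Real.exp (-t))
              + (2 * (d : ℝ) - (nmask S d m x : ℝ) - (nmask S d m y : ℝ))) := by
    rw [hD.deriv, mul_div_assoc]
    generalize Real.exp (-t) / (1 - Real.exp (-t)) = E at *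
    generalize fwd S d m q0 t x = qx at *
    generalize fwd S d m q0 t y = qy at *
    rw [abs_div, abs_of_pos (pow_pos hqx 2), div_le_iff₀ (pow_pos hqx 2)]
    have e1 : |Dy * qx - qy * Dx| ≤ |Dy| * qx + qy * |Dx| := by
      refine (abs_sub _ _).trans ?_
      rw [abs_mul, abs_mul, abs_of_pos hqx, abs_of_nonneg hqy]
    have e2 := mul_le_mul_of_nonneg_right bY hqx.le
    have e3 := mul_le_mul_of_nonneg_left bx hqy
    refine (e1.trans (add_le_add e2 e3)).trans (le_of_eq ?_)
    field_simp
    ring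
  refine ⟨hD.differentiableAt, key, key.trans ?_⟩
  refine mul_le_mul_of_nonneg_left ?_ (div_nonneg hqy hqx.le)
  rw [mul_div_assoc, div_eq_mul_one_div _ t]
  gcongr
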